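/- For any cube Q₀ ⊆ ℝ^n and β ∈ (0,n], there is a constant C_β > 1 such that for every set E ⊆ ℝ^n, (1/C_β) H^{β,Q₀}_∞(E) ≤ H^β_∞(E) ≤ C_β H^{β,Q₀}_∞(E). Consequently, the Choquet integral with respect to H^β_∞ is countably quasi-subadditive: ∫ ∑_j f_j dH^β_∞ ≤ C_β² ∑_j ∫ f_j dH^β_∞ for nonnegative f_j. -/

import Mathlib

open scoped ENNReal
open Metric Set MeasureTheory

noncomputable section

/-- `ℝⁿ` as Euclidean space. -/
abbrev Rn (n : ℕ) := EuclideanSpace ℝ (Fin n)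

/-- The Choquet integral of a nonnegative function `g` with respect to a
(monotone) set function `C`: `∫ g dC := ∫_0^∞ C({g > t}) dt`. -/
noncomputable def choquet {X : Type*} (C : Set X → ℝ≥0∞) (g : X → ℝ≥0∞) : ℝ≥0∞ :=
  ∫⁻ t in Ioi (0 : ℝ), C {x | ENNReal.ofReal t < g x}

/-- The Choquet integral of `g` restricted to a set `A`. -/
noncomputable def choquetOn {X : Type*} (C : Set X → ℝ≥0∞) (A : Set X) (g : X → ℝ≥0∞) : ℝ≥0∞ :=
  ∫⁻ t in Ioi (0 : ℝ), C {x | x ∈ A ∧ ENNReal.ofReal t < g x}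

/-- The `L^∞(C)` norm: `inf {λ > 0 : C({|f| > λ}) = 0}` (formulated in `ℝ≥0∞`). -/
noncomputable def choquetEssSup {X : Type*} (C : Set X → ℝ≥0∞) (f : X → ℝ) : ℝ≥0∞ :=
  sInf {l : ℝ≥0∞ | C {x | l < ENNReal.ofReal |f x|} = 0}

/-- `C`-quasicontinuity of a function `f`. -/
def QuasiCont {X : Type*} [TopologicalSpace X] (C : Set X → ℝ≥0∞) (f : X → ℝ) : Prop :=
  ∀ ε : ℝ≥0∞, 0 < ε → ∃ U : Set X, IsOpen U ∧ C U < ε ∧ ContinuousOn f Uᶜ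

/-- Membership in the capacitary space `L^p(C)`: `C`-quasicontinuous with
finite `p`-th power Choquet integral. -/
def MemChoquetLp {X : Type*} [TopologicalSpace X] (C : Set X → ℝ≥0∞) (p : ℝ) (f : X → ℝ) : Prop :=
  QuasiCont C f ∧ choquet C (fun x => ENNReal.ofReal |f x| ^ p) < ∞

/-- The normalization constant `ω_β = π^{β/2}/Γ(β/2+1)`. -/
noncomputable def omegaC (β : ℝ) : ℝ≥0∞ :=
  ENNReal.ofReal (Real.pi ^ (β / 2) / Real.Gamma (β / 2 + 1))

/-- The `β`-dimensional Hausdorff content `H^β_∞`, defined via countable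
coverings by balls: `inf {∑ ω_β r_i^β : E ⊆ ⋃ B(x_i, r_i)}`. -/
noncomputable def hContent (n : ℕ) (β : ℝ) (E : Set (Rn n)) : ℝ≥0∞ :=
  ⨅ (c : ℕ → Rn n × ℝ) (_ : E ⊆ ⋃ i, ball (c i).1 (c i).2),
    ∑' i, omegaC β * ENNReal.ofReal ((c i).2 ^ β)

/-- The centered Hausdorff content maximal function
`M_{H^β_∞} g(x) := sup_{r>0} (1/(ω_β r^β)) ∫_{B(x,r)} g dH^β_∞`. -/
noncomputable def maximalH (n : ℕ) (β : ℝ) (g : Rn n → ℝ≥0∞) (x : Rn n) : ℝ≥0∞ :=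
  ⨆ (r : ℝ) (_ : 0 < r),
    (omegaC β * ENNReal.ofReal (r ^ β))⁻¹ * choquetOn (hContent n β) (ball x r) g

/-- A dyadic cube of generation `k` (side length `2^{-k} l`) at position `m`
in the dyadic lattice generated by the cube with corner `a` and side `l`. -/
def dyadicCube (n : ℕ) (a : Rn n) (l : ℝ) (k : ℤ) (m : Fin n → ℤ) : Set (Rn n) :=
  {x | ∀ i, a i + m i * ((2 : ℝ) ^ (-k) * l) ≤ x i ∧
        x i < a i + (m i + 1) * ((2 : ℝ) ^ (-k) * l)}

/-- The dyadic Hausdorff content `H^{β,Q₀}_∞` associated with the dyadic lattice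
generated by the cube `Q₀` with corner `a` and side length `l`:
`inf {∑ ℓ(Q_i)^β : E ⊆ ⋃ Q_i, Q_i ∈ D(Q₀)}`. -/
noncomputable def dContent (n : ℕ) (β : ℝ) (a : Rn n) (l : ℝ) (E : Set (Rn n)) : ℝ≥0∞ :=
  ⨅ (c : ℕ → ℤ × (Fin n → ℤ)) (_ : E ⊆ ⋃ i, dyadicCube n a l (c i).1 (c i).2),
    ∑' i, ENNReal.ofReal (((2 : ℝ) ^ (-(c i).1) * l) ^ β)

/-- The dyadic Hausdorff content maximal function
`M^{β,Q₀}_∞ g(x) := sup {(1/ℓ(Q)^β) ∫_Q g dH^{β,Q₀}_∞ : x ∈ Q ∈ D(Q₀)}`. -/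
noncomputable def dyadicMaximal (n : ℕ) (β : ℝ) (a : Rn n) (l : ℝ) (g : Rn n → ℝ≥0∞)
    (x : Rn n) : ℝ≥0∞ :=
  ⨆ (k : ℤ) (m : Fin n → ℤ) (_ : x ∈ dyadicCube n a l k m),
    (ENNReal.ofReal (((2 : ℝ) ^ (-k) * l) ^ β))⁻¹ *
      choquetOn (dContent n β a l) (dyadicCube n a l k m) g

/-- The position of the dyadic cube of generation `k` that contains `x`. -/
def dyadicIndex (n : ℕ) (a : Rn n) (l : ℝ) (k : ℤ) (x : Rn n) : Fin n → ℤ :=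
  fun i => ⌊(x i - a i) / ((2 : ℝ) ^ (-k) * l)⌋

/-- The cost `ℓ(Q)^β` of a dyadic cube `Q` of generation `k`. -/
def dyadicCost (β l : ℝ) (k : ℤ) : ℝ≥0∞ :=
  ENNReal.ofReal (((2 : ℝ) ^ (-k) * l) ^ β)

lemma mem_dyadicCube_iff {n : ℕ} {a : Rn n} {l : ℝ} (hl : 0 < l) {k : ℤ} {m : Fin n → ℤ}
    {x : Rn n} : x ∈ dyadicCube n a l k m ↔ dyadicIndex n a l k x = m := by
  have hs : 0 < (2 : ℝ) ^ (-k) * l := by positivity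
  simp only [dyadicCube, mem_ofPred_eq, dyadicIndex, funext_iff, Int.floor_eq_iff, le_div_iff₀ hs,
    div_lt_iff₀ hs]
  refine forall_congr' fun i => ?_
  constructor <;> rintro ⟨h₁, h₂⟩ <;> constructor <;> linarith

lemma dyadicIndex_eq_of_le {n : ℕ} {a : Rn n} {l : ℝ} {j k : ℤ} (hjk : j ≤ k)
    {x y : Rn n} (h : dyadicIndex n a l k x = dyadicIndex n a l k y) :
    dyadicIndex n a l j x = dyadicIndex n a l j y := by
  obtain ⟨d, rfl⟩ := Int.le.dest hjk
  have key : ∀ z : Rn n, ∀ i,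
      dyadicIndex n a l j z i = dyadicIndex n a l (j + d) z i / ((2 ^ d : ℕ) : ℤ) := by
    intro z i
    simp only [dyadicIndex]
    rw [← Int.floor_div_natCast]
    congr 1
    have : (2 : ℝ) ^ (-j) = 2 ^ (-(j + (d : ℤ))) * 2 ^ d := by
      rw [← zpow_natCast, ← zpow_add₀ two_ne_zero]
      congr 1
      ring
    rw [this, div_div]
    push_cast
    congr 1
    ring
  funext i
  rw [key, key, h]

lemma dyadicCost_ne_zero {β l : ℝ} (hl : 0 < l) (k : ℤ) : dyadicCost β l k ≠ 0 := by
  have : 0 < ((2 : ℝ) ^ (-k) * l) ^ β := by positivity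
  simpa [dyadicCost] using this

lemma dyadicCost_ne_top {β l : ℝ} (k : ℤ) : dyadicCost β l k ≠ ∞ := ENNReal.ofReal_ne_top

lemma dyadicCost_antitone {β l : ℝ} (hβ : 0 < β) (hl : 0 < l) : Antitone (dyadicCost β l) := by
  intro j k hjk
  refine ENNReal.ofReal_le_ofReal (Real.rpow_le_rpow (by positivity) ?_ hβ.le)
  gcongr
  norm_num

lemma exists_dyadicCost_lt {β l : ℝ} (hβ : 0 < β) {ε : ℝ≥0∞} (hε : 0 < ε) :
    ∃ k : ℤ, dyadicCost β l k < ε := by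
  have h₁ : Filter.Tendsto (fun k : ℕ => (2 : ℝ) ^ (-(k : ℤ)) * l) Filter.atTop (nhds 0) := by
    have := (tendsto_pow_atTop_nhds_zero_of_lt_one (r := (2 : ℝ)⁻¹) (by norm_num)
      (by norm_num)).mul_const l
    simpa [zpow_neg] using this
  have h₂ := ENNReal.tendsto_ofReal (h₁.rpow_const (p := β) (Or.inr hβ.le))
  rw [Real.zero_rpow hβ.ne', ENNReal.ofReal_zero] at h₂
  obtain ⟨k, hk⟩ := (h₂.eventually (gt_mem_nhds hε)).exists
  exact ⟨k, hk⟩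

lemma dContent_mono {n : ℕ} {β : ℝ} {a : Rn n} {l : ℝ} {E F : Set (Rn n)} (h : E ⊆ F) :
    dContent n β a l E ≤ dContent n β a l F :=
  iInf_mono fun _ => iInf_mono' fun hF => ⟨h.trans hF, le_rfl⟩

/-- Coverings indexed by an arbitrary countable type are admissible for the dyadic content. -/
lemma dContent_le_tsum {n : ℕ} {β : ℝ} (hβ : 0 < β) {a : Rn n} {l : ℝ}
    {σ : Type*} [Countable σ] (c : σ → ℤ × (Fin n → ℤ)) {E : Set (Rn n)}
    (hE : ∀ x ∈ E, ∃ s, x ∈ dyadicCube n a l (c s).1 (c s).2) :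
    dContent n β a l E ≤ ∑' s, dyadicCost β l (c s).1 := by
  refine ENNReal.le_of_forall_pos_le_add fun ε hε _ => ?_
  obtain ⟨δ, hδ, hδε⟩ := ENNReal.exists_pos_sum_of_countable'
    (ENNReal.coe_ne_zero.2 hε.ne') ℕ
  choose t ht using fun i => exists_dyadicCost_lt hβ (hδ i)
  obtain ⟨e⟩ := nonempty_equiv_of_countable (α := ℕ) (β := σ ⊕ ℕ)
  let c' : σ ⊕ ℕ → ℤ × (Fin n → ℤ) := Sum.elim c fun i => (t i, 0)
  calc dContent n β a l E ≤ ∑' i, dyadicCost β l (c' (e i)).1 := by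
        refine iInf₂_le (fun i => c' (e i)) fun x hx => ?_
        obtain ⟨s, hs⟩ := hE x hx
        refine mem_iUnion.2 ⟨e.symm (Sum.inl s), ?_⟩
        simpa [c'] using hs
    _ = ∑' s, dyadicCost β l (c' s).1 := e.tsum_eq fun s => dyadicCost β l (c' s).1
    _ = ∑' s, dyadicCost β l (c s).1 + ∑' i, dyadicCost β l (t i) := by
        rw [Summable.tsum_sum ENNReal.summable ENNReal.summable]
        simp [c']
    _ ≤ _ := by
        gcongr
        exact (ENNReal.tsum_le_tsum fun i => (ht i).le).trans hδε.le

/-- The stopping-time argument: in a chain of weights with total mass larger than `τ`, the partial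
sums cross the level `τ` at some index. -/
lemma exists_partial_sum_crossing (u : ℤ → ℝ≥0∞)
    (hu : ∀ k, ∑' j, (if j < k then u j else 0) ≠ ∞) {τ : ℝ≥0∞} (hτ : 0 < τ)
    (hlt : τ < ∑' j, u j) :
    ∃ k, ∑' j, (if j < k then u j else 0) ≤ τ ∧
      τ < ∑' j, (if j < k then u j else 0) + u k := by
  set T : ℤ → ℝ≥0∞ := fun k => ∑' j, (if j < k then u j else 0) with hT
  have hmono : Monotone T := by
    intro k k' h
    refine ENNReal.tsum_le_tsum fun j => ?_
    by_cases hj : j < k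
    · simp [hj, hj.trans_le h]
    · simp [hj]
  have hsucc : ∀ k, T (k + 1) = T k + u k := by
    intro k
    rw [hT, ← tsum_ite_eq k (fun j => u j), ← ENNReal.tsum_add]
    refine tsum_congr fun j => ?_
    rcases lt_trichotomy j k with h | h | h
    · simp [h, h.ne, h.trans (lt_add_one k)]
    · simp [h]
    · simp [h.ne', h.not_gt, not_lt.2 (Int.add_one_le_iff.2 h)]
  have hlow : ∃ k, T k ≤ τ := by
    obtain ⟨F, hF⟩ := (((tendsto_order.1
      (ENNReal.tendsto_tsum_compl_atTop_zero (hu 0))).2 τ hτ)).exists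
    obtain ⟨b, hb⟩ := F.finite_toSet.bddBelow
    refine ⟨min b 0, le_trans ?_ hF.le⟩
    refine le_of_le_of_eq ?_
      (tsum_subtype {j | j ∉ F} (fun j => if j < 0 then u j else 0)).symm
    refine ENNReal.tsum_le_tsum fun j => ?_
    by_cases hj : j < min b 0
    · have hjF : j ∉ F := fun h => absurd (hb h) (not_le.2 (hj.trans_le (min_le_left _ _)))
      simp [hj, hjF, hj.trans_le (min_le_right _ _)]
    · simp [hj]
  have hhigh : ∃ k, τ < T k := by
    rw [ENNReal.tsum_eq_iSup_sum, lt_iSup_iff] at hlt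
    obtain ⟨F, hF⟩ := hlt
    obtain ⟨b, hb⟩ := F.finite_toSet.bddAbove
    refine ⟨b + 1, hF.trans_le ?_⟩
    calc ∑ j ∈ F, u j = ∑ j ∈ F, (if j < b + 1 then u j else 0) :=
          Finset.sum_congr rfl fun j hj => by simp [Int.lt_add_one_iff.2 (hb hj)]
      _ ≤ _ := ENNReal.sum_le_tsum F
  obtain ⟨k', hk'⟩ := hhigh
  obtain ⟨k, hk, hmax⟩ := Int.exists_greatest_of_bdd (P := fun k => T k ≤ τ)
    ⟨k', fun z hz => le_of_lt (hmono.reflect_lt (hz.trans_lt hk'))⟩ hlow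
  refine ⟨k, hk, ?_⟩
  rw [← hsucc]
  by_contra h
  exact absurd (hmax _ (not_lt.1 h)) (by simp)

/-- The mass that the weights `w` put on the cubes strictly larger than a given cube `p`
and containing it. -/
def massAbove (n : ℕ) (a : Rn n) (l : ℝ) (w : ℤ × (Fin n → ℤ) → ℝ≥0∞) (p : ℤ × (Fin n → ℤ)) :
    ℝ≥0∞ :=
  ⨆ (x : Rn n) (_ : dyadicIndex n a l p.1 x = p.2),
    ∑' j, if j < p.1 then w (j, dyadicIndex n a l j x) else 0

lemma massAbove_dyadicIndex {n : ℕ} {a : Rn n} {l : ℝ} (w : ℤ × (Fin n → ℤ) → ℝ≥0∞)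
    (k : ℤ) (x : Rn n) :
    massAbove n a l w (k, dyadicIndex n a l k x) =
      ∑' j, if j < k then w (j, dyadicIndex n a l j x) else 0 := by
  refine le_antisymm (iSup₂_le fun y hy => le_of_eq (tsum_congr fun j => ?_))
    (le_iSup₂_of_le x rfl le_rfl)
  by_cases hj : j < k
  · simp [hj, dyadicIndex_eq_of_le hj.le hy]
  · simp [hj]

lemma volume_ofReal_mem_Ico_le (A w : ℝ≥0∞) :
    volume {t : ℝ | 0 < t ∧ A ≤ ENNReal.ofReal t ∧ ENNReal.ofReal t < A + w} ≤ w := by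
  rcases eq_or_ne A ∞ with rfl | hA
  · simp
  rcases eq_or_ne w ∞ with rfl | hw
  · exact le_top
  calc volume {t : ℝ | 0 < t ∧ A ≤ ENNReal.ofReal t ∧ ENNReal.ofReal t < A + w}
      ≤ volume (Ico A.toReal (A.toReal + w.toReal)) := by
        refine measure_mono fun t ⟨ht, h₁, h₂⟩ => ⟨?_, ?_⟩
        · exact ENNReal.toReal_le_of_le_ofReal ht.le h₁
        · rw [← ENNReal.toReal_add hA hw]
          exact (ENNReal.ofReal_lt_iff_lt_toReal ht.le (ENNReal.add_ne_top.2 ⟨hA, hw⟩)).1 h₂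
    _ = w := by
        rw [Real.volume_Ico, add_sub_cancel_left, ENNReal.ofReal_toReal hw]

/-- The Choquet integral of a superposition of dyadic cubes with respect to the dyadic content is
at most the total cost of the cubes. -/
lemma choquet_dContent_le {n : ℕ} {β : ℝ} (hβ : 0 < β) {a : Rn n} {l : ℝ} (hl : 0 < l)
    (w : ℤ × (Fin n → ℤ) → ℝ≥0∞) :
    choquet (dContent n β a l) (fun x => ∑' k, w (k, dyadicIndex n a l k x)) ≤
      ∑' p, w p * dyadicCost β l p.1 := by
  by_cases hfin : ∑' p, w p * dyadicCost β l p.1 = ∞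
  · rw [hfin]
    exact le_top
  have hmass : ∀ x k, ∑' j, (if j < k then w (j, dyadicIndex n a l j x) else 0) ≠ ∞ := by
    intro x k htop
    refine hfin (top_le_iff.1 ?_)
    calc ∞ = (∑' j, if j < k then w (j, dyadicIndex n a l j x) else 0) * dyadicCost β l k := by
          rw [htop, ENNReal.top_mul (dyadicCost_ne_zero hl k)]
      _ ≤ ∑' j, w (j, dyadicIndex n a l j x) * dyadicCost β l j := by
          rw [← ENNReal.tsum_mul_right]
          refine ENNReal.tsum_le_tsum fun j => ?_
          by_cases hj : j < k
          · simp only [hj, if_true]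
            gcongr
            exact dyadicCost_antitone hβ hl hj.le
          · simp [hj]
      _ ≤ ∑' p, w p * dyadicCost β l p.1 :=
          ENNReal.tsum_comp_le_tsum_of_injective (f := fun j => (j, dyadicIndex n a l j x))
            (fun i j h => congrArg Prod.fst h) fun p => w p * dyadicCost β l p.1
  let P : ℤ × (Fin n → ℤ) → Set ℝ := fun p =>
    {t | 0 < t ∧ massAbove n a l w p ≤ ENNReal.ofReal t ∧
      ENNReal.ofReal t < massAbove n a l w p + w p}
  have hP : ∀ p, MeasurableSet (P p) := fun p =>
    measurableSet_Ioi.inter ((measurableSet_le measurable_const ENNReal.measurable_ofReal).inter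
      (measurableSet_lt ENNReal.measurable_ofReal measurable_const))
  calc choquet (dContent n β a l) (fun x => ∑' k, w (k, dyadicIndex n a l k x))
      ≤ ∫⁻ t in Ioi (0 : ℝ), ∑' p, (P p).indicator (fun _ => dyadicCost β l p.1) t := by
        refine setLIntegral_mono' measurableSet_Ioi fun t ht => ?_
        refine (dContent_le_tsum hβ (σ := {p // t ∈ P p}) Subtype.val fun x hx => ?_).trans
          (le_of_eq ?_)
        · obtain ⟨k, hk⟩ := exists_partial_sum_crossing
            (fun j => w (j, dyadicIndex n a l j x)) (hmass x) (ENNReal.ofReal_pos.2 ht) hx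
          rw [← massAbove_dyadicIndex] at hk
          exact ⟨⟨(k, dyadicIndex n a l k x), ht, hk⟩, (mem_dyadicCube_iff hl).2 rfl⟩
        · exact (tsum_subtype {p | t ∈ P p} fun p => dyadicCost β l p.1)
    _ ≤ ∫⁻ t, ∑' p, (P p).indicator (fun _ => dyadicCost β l p.1) t :=
        setLIntegral_le_lintegral _ _
    _ = ∑' p, dyadicCost β l p.1 * volume (P p) := by
        rw [lintegral_tsum fun p => (measurable_const.indicator (hP p)).aemeasurable]
        simp only [lintegral_indicator_const (hP _)]
    _ ≤ ∑' p, w p * dyadicCost β l p.1 := by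
        refine ENNReal.tsum_le_tsum fun p => ?_
        rw [mul_comm]
        gcongr
        exact volume_ofReal_mem_Ico_le _ _

/-- Sets of small dyadic content have cheap fractional covers by dyadic cubes. -/
lemma exists_weights_of_set {n : ℕ} {β : ℝ} {a : Rn n} {l : ℝ} (hl : 0 < l)
    (E : Set (Rn n)) {ε : ℝ≥0∞} (hε : ε ≠ 0) :
    ∃ v : ℤ × (Fin n → ℤ) → ℝ≥0∞, (∀ x ∈ E, 1 ≤ ∑' k, v (k, dyadicIndex n a l k x)) ∧
      ∑' p, v p * dyadicCost β l p.1 ≤ dContent n β a l E + ε := by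
  by_cases htop : dContent n β a l E = ∞
  · refine ⟨fun _ => ∞, fun x _ => ?_, by simp [htop]⟩
    exact le_top.trans (ENNReal.le_tsum (f := fun _ : ℤ => (∞ : ℝ≥0∞)) 0)
  have hlt := ENNReal.lt_add_right htop hε
  nth_rw 1 [dContent] at hlt
  simp only [iInf_lt_iff] at hlt
  obtain ⟨c, hc, hsum⟩ := hlt
  refine ⟨fun p => ∑' i, if p = c i then 1 else 0, fun x hx => ?_, le_trans (le_of_eq ?_) hsum.le⟩
  · obtain ⟨i, hi⟩ := mem_iUnion.1 (hc hx)
    rw [mem_dyadicCube_iff hl] at hi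
    refine le_trans ?_ (ENNReal.le_tsum (c i).1)
    refine le_trans ?_ (ENNReal.le_tsum i)
    simp [hi]
  · simp only [← ENNReal.tsum_mul_right]
    rw [ENNReal.tsum_comm]
    refine tsum_congr fun i => ?_
    rw [tsum_eq_single (c i) fun p hp => by simp [hp]]
    simp [dyadicCost]

/-- The Choquet integral dominates a quarter of the dyadic sum over level sets. -/
lemma tsum_zpow_mul_le_choquet {X : Type*} {C : Set X → ℝ≥0∞}
    (hC : ∀ E F, E ⊆ F → C E ≤ C F) (f : X → ℝ≥0∞) :
    ∑' k : ℤ, (2 : ℝ≥0∞) ^ (k + 1) * C {x | (2 : ℝ≥0∞) ^ k < f x} ≤ 4 * choquet C f := by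
  have hpow : ∀ k : ℤ, ENNReal.ofReal ((2 : ℝ) ^ k) = 2 ^ k := by
    intro k
    have h : ((2 : ℝ) ^ k) = ((2 ^ k : NNReal) : ℝ) := by push_cast; rfl
    rw [h, ENNReal.ofReal_coe_nnreal, ENNReal.coe_zpow two_ne_zero]
    rfl
  have hdisj : Pairwise (Function.onFun Disjoint fun k : ℤ => Ioc ((2 : ℝ) ^ (k - 1)) (2 ^ k)) := by
    simpa using Monotone.pairwise_disjoint_on_Ioc_pred
      (zpow_right_mono₀ (one_le_two (α := ℝ)))
  calc ∑' k : ℤ, (2 : ℝ≥0∞) ^ (k + 1) * C {x | (2 : ℝ≥0∞) ^ k < f x}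
      ≤ ∑' k : ℤ, 4 * ∫⁻ t in Ioc ((2 : ℝ) ^ (k - 1)) (2 ^ k),
          C {x | ENNReal.ofReal t < f x} := by
        refine ENNReal.tsum_le_tsum fun k => ?_
        have hlen : ENNReal.ofReal ((2 : ℝ) ^ k - 2 ^ (k - 1)) = 2 ^ (k - 1) := by
          rw [show (2 : ℝ) ^ k - 2 ^ (k - 1) = 2 ^ (k - 1) by
            rw [zpow_sub_one₀ two_ne_zero]; ring, hpow]
        calc (2 : ℝ≥0∞) ^ (k + 1) * C {x | (2 : ℝ≥0∞) ^ k < f x}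
            = 4 * ∫⁻ _ in Ioc ((2 : ℝ) ^ (k - 1)) (2 ^ k), C {x | (2 : ℝ≥0∞) ^ k < f x} := by
              rw [setLIntegral_const, Real.volume_Ioc, hlen,
                show k + 1 = 2 + (k - 1) by ring,
                ENNReal.zpow_add two_ne_zero ENNReal.ofNat_ne_top,
                show (2 : ℝ≥0∞) ^ (2 : ℤ) = 4 by norm_cast]
              ring
          _ ≤ _ := by
              gcongr 4 * ?_
              refine setLIntegral_mono' measurableSet_Ioc fun t ht => hC _ _ fun x hx => ?_
              exact lt_of_le_of_lt ((ENNReal.ofReal_le_ofReal ht.2).trans (hpow k).le) hx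
    _ = 4 * ∫⁻ t in ⋃ k : ℤ, Ioc ((2 : ℝ) ^ (k - 1)) (2 ^ k), C {x | ENNReal.ofReal t < f x} := by
        rw [ENNReal.tsum_mul_left, lintegral_iUnion (fun _ => measurableSet_Ioc) hdisj]
    _ ≤ 4 * choquet C f := by
        gcongr
        refine lintegral_mono_set (iUnion_subset fun k t ht => ?_)
        exact lt_trans (by positivity) ht.1

/-- Every nonnegative function has a fractional cover by dyadic cubes whose cost is comparable
with its Choquet integral. -/
lemma exists_weights_of_fun {n : ℕ} {β : ℝ} {a : Rn n} {l : ℝ} (hl : 0 < l)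
    (f : Rn n → ℝ≥0∞) {ε : ℝ≥0∞} (hε : ε ≠ 0) :
    ∃ w : ℤ × (Fin n → ℤ) → ℝ≥0∞, (∀ x, f x ≤ ∑' k, w (k, dyadicIndex n a l k x)) ∧
      ∑' p, w p * dyadicCost β l p.1 ≤ 4 * choquet (dContent n β a l) f + ε := by
  obtain ⟨δ, hδ, hδε⟩ := ENNReal.exists_pos_sum_of_countable' hε ℤ
  have h2 : ∀ k : ℤ, (2 : ℝ≥0∞) ^ k ≠ ∞ := fun k =>
    (ENNReal.zpow_lt_top two_ne_zero ENNReal.ofNat_ne_top k).ne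
  have h2' : ∀ k : ℤ, (2 : ℝ≥0∞) ^ k ≠ 0 := fun k =>
    (ENNReal.zpow_pos two_ne_zero ENNReal.ofNat_ne_top k).ne'
  choose v hv hvsum using fun k : ℤ => exists_weights_of_set (β := β) (a := a) hl
    {x | (2 : ℝ≥0∞) ^ k < f x} (ε := δ k / 2 ^ (k + 1))
    (ENNReal.div_pos (hδ k).ne' (h2 _)).ne'
  refine ⟨fun p => ∑' k : ℤ, 2 ^ (k + 1) * v k p, fun x => ?_, ?_⟩
  · rw [ENNReal.tsum_comm]
    simp only [ENNReal.tsum_mul_left]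
    have hlevel : ∀ k : ℤ, (2 : ℝ≥0∞) ^ k < f x → (2 : ℝ≥0∞) ^ (k + 1) ≤
        ∑' k : ℤ, (2 : ℝ≥0∞) ^ (k + 1) * ∑' j, v k (j, dyadicIndex n a l j x) := fun k hk =>
      le_trans (le_mul_of_one_le_right' (hv k x hk)) (ENNReal.le_tsum k)
    rcases eq_or_ne (f x) 0 with h0 | h0
    · simp [h0]
    by_cases htop : f x = ∞
    · by_contra hlt
      rw [htop, top_le_iff] at hlt
      have hpos := (ENNReal.zpow_pos two_ne_zero ENNReal.ofNat_ne_top _).trans_le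
        (hlevel 0 (by simp [htop]))
      obtain ⟨k, -, hk⟩ :=
        ENNReal.exists_mem_Ioc_zpow hpos.ne' hlt ENNReal.one_lt_two ENNReal.ofNat_ne_top
      have hk' := (hlevel (k + 1) (htop ▸ (h2 _).lt_top)).trans hk
      rw [ENNReal.zpow_add two_ne_zero ENNReal.ofNat_ne_top (k + 1) 1, zpow_one, mul_two] at hk'
      exact hk'.not_gt (ENNReal.lt_add_right (h2 _) (h2' _))
    · obtain ⟨k, hk, hk'⟩ := ENNReal.exists_mem_Ioc_zpow h0 htop ENNReal.one_lt_two ENNReal.ofNat_ne_top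
      exact hk'.trans (hlevel k hk)
  · calc ∑' p, (∑' k : ℤ, 2 ^ (k + 1) * v k p) * dyadicCost β l p.1
        = ∑' k : ℤ, 2 ^ (k + 1) * ∑' p, v k p * dyadicCost β l p.1 := by
          simp only [← ENNReal.tsum_mul_right, ← ENNReal.tsum_mul_left]
          rw [ENNReal.tsum_comm]
          simp only [mul_assoc]
      _ ≤ ∑' k : ℤ,
            ((2 : ℝ≥0∞) ^ (k + 1) * dContent n β a l {x | (2 : ℝ≥0∞) ^ k < f x} + δ k) := by
          refine ENNReal.tsum_le_tsum fun k => ?_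
          grw [hvsum k, mul_add, ENNReal.mul_div_cancel (h2' _) (h2 _)]
      _ ≤ _ := by
          rw [ENNReal.tsum_add]
          gcongr
          exact tsum_zpow_mul_le_choquet (fun _ _ => dContent_mono) f

/-- The Choquet integral with respect to the dyadic content is countably quasi-subadditive. -/
lemma choquet_dContent_tsum_le {n : ℕ} {β : ℝ} (hβ : 0 < β) {a : Rn n} {l : ℝ} (hl : 0 < l)
    (f : ℕ → Rn n → ℝ≥0∞) :
    choquet (dContent n β a l) (fun x => ∑' j, f j x) ≤
      4 * ∑' j, choquet (dContent n β a l) (f j) := by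
  refine ENNReal.le_of_forall_pos_le_add fun ε hε _ => ?_
  obtain ⟨δ, hδ, hδε⟩ := ENNReal.exists_pos_sum_of_countable'
    (ENNReal.coe_ne_zero.2 hε.ne') ℕ
  choose w hw hwsum using fun j => exists_weights_of_fun (β := β) (a := a) hl (f j) (hδ j).ne'
  calc choquet (dContent n β a l) (fun x => ∑' j, f j x)
      ≤ choquet (dContent n β a l)
          (fun x => ∑' k, ∑' j, w j (k, dyadicIndex n a l k x)) := by
        refine lintegral_mono fun t => dContent_mono fun x hx => ?_
        refine lt_of_lt_of_le (mem_ofPred_eq ▸ hx) ?_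
        beta_reduce
        rw [ENNReal.tsum_comm]
        exact ENNReal.tsum_le_tsum fun j => hw j x
    _ ≤ ∑' p, (∑' j, w j p) * dyadicCost β l p.1 :=
        choquet_dContent_le hβ hl fun p => ∑' j, w j p
    _ = ∑' j, ∑' p, w j p * dyadicCost β l p.1 := by
        simp only [← ENNReal.tsum_mul_right]
        rw [ENNReal.tsum_comm]
    _ ≤ ∑' j, (4 * choquet (dContent n β a l) (f j) + δ j) := ENNReal.tsum_le_tsum hwsum
    _ ≤ _ := by
        rw [ENNReal.tsum_add, ENNReal.tsum_mul_left]
        gcongr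

/-- `dyadicIndex` moves by at most one in each coordinate between points at distance less than
the side length. -/
lemma abs_dyadicIndex_sub_le_one {n : ℕ} {a : Rn n} {l : ℝ} (hl : 0 < l) {k : ℤ} {x y : Rn n}
    (h : dist y x ≤ (2 : ℝ) ^ (-k) * l) (i : Fin n) :
    |dyadicIndex n a l k y i - dyadicIndex n a l k x i| ≤ 1 := by
  have hs : 0 < (2 : ℝ) ^ (-k) * l := by positivity
  have hi : |y i - x i| ≤ (2 : ℝ) ^ (-k) * l := by
    have := PiLp.norm_apply_le (y - x) i
    rw [← dist_eq_norm] at this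
    simpa using this.trans h
  rw [abs_le] at hi ⊢
  have h₁ : (y i - a i) / ((2 : ℝ) ^ (-k) * l) ≤ (x i - a i) / ((2 : ℝ) ^ (-k) * l) + 1 := by
    rw [div_add_one hs.ne']
    gcongr
    linarith
  have h₂ : (x i - a i) / ((2 : ℝ) ^ (-k) * l) ≤ (y i - a i) / ((2 : ℝ) ^ (-k) * l) + 1 := by
    rw [div_add_one hs.ne']
    gcongr
    linarith
  have h₃ := Int.floor_mono h₁
  have h₄ := Int.floor_mono h₂
  rw [Int.floor_add_one] at h₃ h₄
  simp only [dyadicIndex]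
  constructor <;> linarith

lemma exists_dyadic_side_mem_Icc {l r : ℝ} (hl : 0 < l) (hr : 0 < r) :
    ∃ k : ℤ, r ≤ (2 : ℝ) ^ (-k) * l ∧ (2 : ℝ) ^ (-k) * l ≤ 2 * r := by
  obtain ⟨m, h₁, h₂⟩ := exists_mem_Ico_zpow (div_pos hr hl) (one_lt_two (α := ℝ))
  rw [le_div_iff₀ hl] at h₁
  rw [div_lt_iff₀ hl] at h₂
  refine ⟨-(m + 1), by simpa using h₂.le, ?_⟩
  rw [neg_neg, zpow_add_one₀ two_ne_zero]
  linarith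

lemma omegaC_eq_ofReal_pos {β : ℝ} (hβ : 0 < β) :
    ∃ ω : ℝ, 0 < ω ∧ omegaC β = ENNReal.ofReal ω :=
  ⟨_, div_pos (Real.rpow_pos_of_pos Real.pi_pos _) (Real.Gamma_pos_of_pos (by linarith)), rfl⟩

lemma exists_dContent_le_hContent {n : ℕ} {β : ℝ} (hβ : 0 < β) {a : Rn n} {l : ℝ} (hl : 0 < l) :
    ∃ C : ℝ, 0 < C ∧ ∀ E, dContent n β a l E ≤ ENNReal.ofReal C * hContent n β E := by
  obtain ⟨ω, hω, hωβ⟩ := omegaC_eq_ofReal_pos hβ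
  have hC : 0 < 3 ^ n * 2 ^ β / ω := by positivity
  refine ⟨3 ^ n * 2 ^ β / ω, hC, fun E => ?_⟩
  rw [← ENNReal.inv_mul_le_iff (ENNReal.ofReal_pos.2 hC).ne' ENNReal.ofReal_ne_top]
  refine le_iInf₂ fun c hc => ?_
  rw [ENNReal.inv_mul_le_iff (ENNReal.ofReal_pos.2 hC).ne' ENNReal.ofReal_ne_top]
  choose k hk hk' using fun i : {i // 0 < (c i).2} => exists_dyadic_side_mem_Icc hl i.2
  let Q : {i // 0 < (c i).2} × (Fin n → Fin 3) → ℤ × (Fin n → ℤ) := fun p =>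
    (k p.1, fun i => dyadicIndex n a l (k p.1) (c p.1).1 i + ((p.2 i : ℕ) : ℤ) - 1)
  calc dContent n β a l E ≤ ∑' p, dyadicCost β l (Q p).1 := by
        refine dContent_le_tsum hβ Q fun x hx => ?_
        obtain ⟨i, hi⟩ := mem_iUnion.1 (hc hx)
        have hd := abs_dyadicIndex_sub_le_one (a := a) hl
          ((mem_ball.1 hi).le.trans (hk ⟨i, pos_of_mem_ball hi⟩))
        refine ⟨(⟨i, pos_of_mem_ball hi⟩, fun t =>
          ⟨(dyadicIndex n a l (k ⟨i, pos_of_mem_ball hi⟩) x t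
            - dyadicIndex n a l (k ⟨i, pos_of_mem_ball hi⟩) (c i).1 t + 1).toNat, ?_⟩), ?_⟩
        · have := abs_le.1 (hd t)
          omega
        · rw [mem_dyadicCube_iff hl]
          funext t
          have := abs_le.1 (hd t)
          simp only [Q]
          omega
    _ = ∑' i, 3 ^ n * dyadicCost β l (k i) := by
        rw [ENNReal.tsum_prod']
        simp [Q, tsum_fintype]
    _ ≤ ∑' i : {i // 0 < (c i).2},
          ENNReal.ofReal (3 ^ n * 2 ^ β / ω) * (omegaC β * ENNReal.ofReal ((c i).2 ^ β)) := by
        refine ENNReal.tsum_le_tsum fun i => ?_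
        rw [hωβ, ← ENNReal.ofReal_mul hω.le, ← ENNReal.ofReal_mul hC.le, dyadicCost,
          show (3 : ℝ≥0∞) ^ n = ENNReal.ofReal (3 ^ n) by
            rw [ENNReal.ofReal_pow (by norm_num), ENNReal.ofReal_ofNat],
          ← ENNReal.ofReal_mul (by positivity)]
        refine ENNReal.ofReal_le_ofReal ?_
        calc (3 : ℝ) ^ n * ((2 : ℝ) ^ (-k i) * l) ^ β ≤ 3 ^ n * (2 * (c i).2) ^ β := by
              gcongr 3 ^ n * ?_ ^ β
              exact hk' i
          _ = 3 ^ n * 2 ^ β / ω * (ω * (c i).2 ^ β) := by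
              rw [Real.mul_rpow two_pos.le i.2.le]
              field_simp
    _ ≤ ∑' i, ENNReal.ofReal (3 ^ n * 2 ^ β / ω) * (omegaC β * ENNReal.ofReal ((c i).2 ^ β)) :=
        ENNReal.tsum_comp_le_tsum_of_injective Subtype.val_injective
          fun i => ENNReal.ofReal (3 ^ n * 2 ^ β / ω) * (omegaC β * ENNReal.ofReal ((c i).2 ^ β))
    _ = _ := ENNReal.tsum_mul_left

lemma dyadicCube_subset_ball {n : ℕ} {a : Rn n} {l : ℝ} (hl : 0 < l) (k : ℤ) (m : Fin n → ℤ) :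
    dyadicCube n a l k m ⊆
      ball (WithLp.toLp 2 fun i => a i + m i * ((2 : ℝ) ^ (-k) * l))
        ((n + 1) * ((2 : ℝ) ^ (-k) * l)) := by
  intro x hx
  have hs : 0 < (2 : ℝ) ^ (-k) * l := by positivity
  set s := (2 : ℝ) ^ (-k) * l
  rw [mem_ball, EuclideanSpace.dist_eq, Real.sqrt_lt' (by positivity)]
  calc ∑ i, dist (x i) (a i + m i * s) ^ 2 ≤ ∑ _i : Fin n, s ^ 2 := by
        refine Finset.sum_le_sum fun i _ => ?_
        rw [Real.dist_eq, sq_abs]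
        have := hx i
        refine pow_le_pow_left₀ ?_ ?_ 2 <;> linarith
    _ = n * s ^ 2 := by simp
    _ < ((n + 1) * s) ^ 2 := by
        have hn : (n : ℝ) < (n + 1) ^ 2 := by nlinarith [(Nat.cast_nonneg n : (0 : ℝ) ≤ n)]
        have := mul_lt_mul_of_pos_right hn (pow_pos hs 2)
        rwa [← mul_pow] at this

lemma exists_hContent_le_dContent {n : ℕ} {β : ℝ} (hβ : 0 < β) {a : Rn n} {l : ℝ} (hl : 0 < l) :
    ∃ C : ℝ, 0 < C ∧ ∀ E, hContent n β E ≤ ENNReal.ofReal C * dContent n β a l E := by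
  obtain ⟨ω, hω, hωβ⟩ := omegaC_eq_ofReal_pos hβ
  have hC : 0 < ω * (n + 1) ^ β := by positivity
  refine ⟨ω * (n + 1) ^ β, hC, fun E => ?_⟩
  rw [← ENNReal.inv_mul_le_iff (ENNReal.ofReal_pos.2 hC).ne' ENNReal.ofReal_ne_top]
  refine le_iInf₂ fun c hc => ?_
  rw [ENNReal.inv_mul_le_iff (ENNReal.ofReal_pos.2 hC).ne' ENNReal.ofReal_ne_top,
    ← ENNReal.tsum_mul_left]
  refine iInf₂_le_of_le (fun i => (_, _))
    (hc.trans (iUnion_mono fun i => dyadicCube_subset_ball hl (c i).1 (c i).2))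
    (ENNReal.tsum_le_tsum fun i => le_of_eq ?_)
  rw [hωβ, ← ENNReal.ofReal_mul hω.le, ← ENNReal.ofReal_mul hC.le,
    Real.mul_rpow (by positivity) (by positivity), mul_assoc]

lemma choquet_le_mul_choquet {X : Type*} {C D : Set X → ℝ≥0∞} {K : ℝ≥0∞} (hK : K ≠ ∞)
    (h : ∀ E, C E ≤ K * D E) (g : X → ℝ≥0∞) : choquet C g ≤ K * choquet D g := by
  rw [choquet, choquet, ← lintegral_const_mul' _ _ hK]
  exact lintegral_mono fun t => h _

/-- The dyadic Hausdorff content associated with the lattice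
generated by a cube `Q₀` (corner `a`, side `l > 0`) is comparable with the
Hausdorff content, and consequently the Choquet integral with respect to
`H^β_∞` is countably quasi-subadditive with constant `C_β²`. -/
theorem statement19 (n : ℕ) (β : ℝ) (hβ0 : 0 < β) (hβn : β ≤ n)
    (a : Rn n) (l : ℝ) (hl : 0 < l) :
    ∃ Cβ : ℝ, 1 < Cβ ∧
      (∀ E : Set (Rn n),
        (ENNReal.ofReal Cβ)⁻¹ * dContent n β a l E ≤ hContent n β E ∧
          hContent n β E ≤ ENNReal.ofReal Cβ * dContent n β a l E) ∧
      (∀ f : ℕ → Rn n → ℝ≥0∞,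
        choquet (hContent n β) (fun x => ∑' j, f j x) ≤
          ENNReal.ofReal Cβ ^ 2 * ∑' j, choquet (hContent n β) (f j)) := by
  obtain ⟨C₁, hC₁, h₁⟩ := exists_dContent_le_hContent hβ0 (a := a) hl
  obtain ⟨C₂, hC₂, h₂⟩ := exists_hContent_le_dContent hβ0 (a := a) hl
  have hC : 0 < 2 * (1 + C₁ + C₂) := by positivity
  refine ⟨2 * (1 + C₁ + C₂), by linarith, fun E => ⟨?_, ?_⟩, fun f => ?_⟩
  · rw [ENNReal.inv_mul_le_iff (ENNReal.ofReal_pos.2 hC).ne' ENNReal.ofReal_ne_top]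
    refine (h₁ E).trans ?_
    gcongr
    linarith
  · refine (h₂ E).trans ?_
    gcongr
    linarith
  · calc choquet (hContent n β) (fun x => ∑' j, f j x)
        ≤ ENNReal.ofReal C₂ * (4 * ∑' j, choquet (dContent n β a l) (f j)) := by
          refine (choquet_le_mul_choquet ENNReal.ofReal_ne_top h₂ _).trans ?_
          gcongr
          exact choquet_dContent_tsum_le hβ0 hl f
      _ ≤ ENNReal.ofReal C₂ *
            (4 * ∑' j, ENNReal.ofReal C₁ * choquet (hContent n β) (f j)) := by
          gcongr with j
          exact choquet_le_mul_choquet ENNReal.ofReal_ne_top h₁ _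
      _ = ENNReal.ofReal (C₂ * 4 * C₁) * ∑' j, choquet (hContent n β) (f j) := by
          rw [ENNReal.tsum_mul_left, ENNReal.ofReal_mul (by positivity),
            ENNReal.ofReal_mul hC₂.le, ENNReal.ofReal_ofNat]
          ring
      _ ≤ _ := by
          rw [← ENNReal.ofReal_pow hC.le]
          gcongr
          nlinarith [mul_pos hC₁ hC₂]

end
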